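/- (Crapo) Let L be a finite lattice with minimum 0 and maximum 1 that is not complemented, i.e., there exists p ∈ L such that no q ∈ L satisfies both p ∨ q = 1 and p ∧ q = 0. Then μ_L(0,1) = 0. -/

import Mathlib

open scoped Classical

/-- The Möbius function of a finite lattice `L`, as an element of its incidence algebra
(the unique `μ` with `μ ⋆ ζ = δ`), evaluated at a pair of elements. -/
noncomputable def mobius {L : Type*} [Fintype L] [PartialOrder L] (x y : L) : ℝ :=
  letI : LocallyFiniteOrder L := Fintype.toLocallyFiniteOrder
  IncidenceAlgebra.mu ℝ x y

open Finset in
theorem crapo_sum_swap {L : Type*} [Fintype L] (f : L → L → L → L → ℝ) :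
    ∑ x, ∑ y, ∑ z, ∑ w, f x y z w = ∑ z, ∑ w, ∑ x, ∑ y, f x y z w := by
  calc _ = ∑ x, ∑ z, ∑ w, ∑ y, f x y z w := by
        refine sum_congr rfl fun x _ => ?_
        rw [sum_comm]
        exact sum_congr rfl fun z _ => sum_comm
    _ = _ := by
        rw [sum_comm]
        exact sum_congr rfl fun z _ => sum_comm

/-- Abstract version of the double counting argument. -/
theorem crapo_aux {L : Type*} [Fintype L] [Lattice L] [BoundedOrder L]
    (a b : L → ℝ) (Z : L → L → ℝ) (hZ : ∀ x y, Z x y = if x ≤ y then 1 else 0)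
    (ha : ∀ t, ∑ x, a x * Z x t = if t = ⊥ then 1 else 0)
    (hb : ∀ t, ∑ y, Z t y * b y = if t = ⊤ then 1 else 0)
    (ha0 : a ⊥ = 1) (hb1 : b ⊤ = 1)
    (p : L) (hp : ∀ q : L, ¬(p ⊔ q = ⊤ ∧ p ⊓ q = ⊥)) : a ⊤ = 0 := by
  have Zinf : ∀ x y z, Z x (y ⊓ z) = Z x y * Z x z := by
    intro x y z
    simp only [hZ, le_inf_iff]
    split_ifs <;> simp_all
  have Zsup : ∀ x y z, Z (x ⊔ y) z = Z x z * Z y z := by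
    intro x y z
    simp only [hZ, sup_le_iff]
    split_ifs <;> simp_all
  have T1 : ∀ z w, ∑ x, ∑ y, a x * b y * Z x y * Z x z * Z w y
      = ∑ x, a x * Z x z * (if x ⊔ w = ⊤ then 1 else 0) := by
    intro z w
    refine Finset.sum_congr rfl fun x _ => ?_
    rw [← hb, Finset.mul_sum]
    refine Finset.sum_congr rfl fun y _ => ?_
    rw [Zsup]; ring
  have T2 : ∀ z w, ∑ x, ∑ y, a x * b y * Z x y * Z x z * Z w y
      = ∑ y, b y * Z w y * (if y ⊓ z = ⊥ then 1 else 0) := by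
    intro z w
    rw [Finset.sum_comm]
    refine Finset.sum_congr rfl fun y _ => ?_
    rw [← ha, Finset.mul_sum]
    refine Finset.sum_congr rfl fun x _ => ?_
    rw [Zinf]; ring
  have T : ∀ z w, w ≤ z → ∑ x, ∑ y, a x * b y * Z x y * Z x z * Z w y
      = if z = ⊤ ∧ w = ⊥ then a ⊤ else 0 := by
    intro z w hwz
    split_ifs with h
    · obtain ⟨rfl, rfl⟩ := h
      rw [T1]
      simp [hZ]
    · by_cases hz : z = ⊤
      · have hw : w ≠ ⊥ := fun hw => h ⟨hz, hw⟩
        rw [T2]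
        refine Finset.sum_eq_zero fun y _ => ?_
        rw [hZ]
        split_ifs with h1 h2 <;> simp
        exact absurd (le_bot_iff.1 (h2 ▸ le_inf h1 hwz)) hw
      · rw [T1]
        refine Finset.sum_eq_zero fun x _ => ?_
        rw [hZ]
        split_ifs with h1 h2 <;> simp
        exact absurd (top_le_iff.1 (h2 ▸ sup_le h1 hwz)) hz
  have S0 : ∑ x, ∑ y, ∑ z, ∑ w, (b z * Z p z * (a w * Z w p)) *
      (a x * b y * Z x y * Z x z * Z w y) = 0 := by
    refine Finset.sum_eq_zero fun x _ => Finset.sum_eq_zero fun y _ => ?_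
    have : ∑ z, ∑ w, (b z * Z p z * (a w * Z w p)) * (a x * b y * Z x y * Z x z * Z w y)
        = a x * b y * Z x y * ((∑ z, Z (p ⊔ x) z * b z) * ∑ w, a w * Z w (p ⊓ y)) := by
      rw [Finset.sum_mul_sum, Finset.mul_sum]
      refine Finset.sum_congr rfl fun z _ => ?_
      rw [Finset.mul_sum]
      refine Finset.sum_congr rfl fun w _ => ?_
      rw [Zsup, Zinf]; ring
    rw [this, ha, hb, hZ]
    split_ifs with h1 h2 h3 <;> simp
    exact absurd ⟨h2, le_bot_iff.1 (h3 ▸ inf_le_inf_left p h1)⟩ (hp x)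
  rw [crapo_sum_swap] at S0
  rw [← S0]
  simp_rw [← Finset.mul_sum]
  rw [Finset.sum_eq_single ⊤, Finset.sum_eq_single ⊥, T _ _ bot_le]
  · simp [hZ, ha0, hb1]
  · intro w _ hw
    rw [T _ _ le_top]; simp [hw]
  · simp
  · intro z _ hz
    refine Finset.sum_eq_zero fun w _ => ?_
    by_cases h1 : w ≤ p
    · by_cases h2 : p ≤ z
      · rw [T _ _ (h1.trans h2)]; simp [hz]
      · simp [hZ, h2]
    · simp [hZ, h1]
  · simp

/-- **Crapo's theorem**: if a finite bounded lattice `L` is not complemented, i.e. some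
`p : L` has no complement, then `μ_L(0, 1) = 0`. -/
theorem crapo {L : Type*} [Fintype L] [Lattice L] [BoundedOrder L]
    (h : ∃ p : L, ∀ q : L, ¬(p ⊔ q = ⊤ ∧ p ⊓ q = ⊥)) :
    mobius (⊥ : L) (⊤ : L) = 0 := by
  obtain ⟨p, hp⟩ := h
  letI : LocallyFiniteOrder L := Fintype.toLocallyFiniteOrder
  change IncidenceAlgebra.mu ℝ (⊥ : L) ⊤ = 0
  refine crapo_aux (fun x => IncidenceAlgebra.mu ℝ (⊥ : L) x)
    (fun y => IncidenceAlgebra.mu ℝ y (⊤ : L)) (fun x y => if x ≤ y then 1 else 0)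
    (fun _ _ => rfl) ?_ ?_ (by simp) (by simp) p hp
  · intro t
    have := IncidenceAlgebra.sum_Icc_mu_right (𝕜 := ℝ) (⊥ : L) t
    simp only [mul_ite, mul_one, mul_zero, ← Finset.sum_filter]
    rw [show (Finset.univ.filter (fun x : L => x ≤ t)) = Finset.Icc ⊥ t by ext; simp, this]
    simp only [eq_comm]
  · intro t
    have := IncidenceAlgebra.sum_Icc_mu_left (𝕜 := ℝ) t (⊤ : L)
    simp only [ite_mul, one_mul, zero_mul, ← Finset.sum_filter]
    rw [show (Finset.univ.filter (fun x : L => t ≤ x)) = Finset.Icc t ⊤ by ext; simp, this]
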